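/- Let (T,f) be a Hubbard tree with kneading sequence ν and ρ = ρ_ν. If k < k' ≤ ρ(k) and the closest precritical point ζ_{k'} exists in T, then f^k(ζ_{k'}) is the closest precritical point ζ_{k'−k}. -/

import Mathlib

/- Common definitions for formalizing "Admissibility of kneading sequences and
structure of Hubbard trees for quadratic polynomials" by Bruin–Schleicher. -/

namespace HubbardTrees

/-- The symbols `0`, `1`, `*` used for itineraries and kneading sequences. -/
inductive Sym : Type
  | zero : Sym
  | one : Sym
  | star : Sym
deriving DecidableEq

/-- `A` is an arc in `X` joining `x` and `y` (a point if `x = y`, otherwise a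
homeomorphic image of `[0,1]` with endpoints `x` and `y`). -/
def IsArcBetween {X : Type*} [TopologicalSpace X] (A : Set X) (x y : X) : Prop :=
  (x = y ∧ A = {x}) ∨
  (x ≠ y ∧ ∃ γ : Path x y, Topology.IsEmbedding ⇑γ ∧ Set.range ⇑γ = A)

/-- The global arms at `x`: the connected components of `X \ {x}`. -/
def arms {X : Type*} [TopologicalSpace X] (x : X) : Set (Set X) :=
  {C | ∃ y, y ≠ x ∧ C = connectedComponentIn {x}ᶜ y}

/-- The global arm at `x` containing `y` (for `y ≠ x`): the component of `X \ {x}`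
containing `y`.  Local arms at `x` being germs of global arms, we represent the local
arm at `x` pointing towards `y` by this set. -/
def armTo {X : Type*} [TopologicalSpace X] (x y : X) : Set X :=
  connectedComponentIn {x}ᶜ y

/-- `x` is an endpoint: it has exactly one arm. -/
def IsEndpoint {X : Type*} [TopologicalSpace X] (x : X) : Prop :=
  (arms x).ncard = 1

/-- `x` is a branch point: it has at least three arms. -/
def IsBranchPt {X : Type*} [TopologicalSpace X] (x : X) : Prop :=
  3 ≤ (arms x).ncard

/-- `f` maps the set `A` homeomorphically onto its image. -/
def MapsHomeoOn {X : Type*} [TopologicalSpace X] (f : X → X) (A : Set X) : Prop :=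
  Topology.IsEmbedding (A.restrict f)

/-- `f` is a local homeomorphism onto its image at `x`. -/
def IsLocalHomeoAt {X : Type*} [TopologicalSpace X] (f : X → X) (x : X) : Prop :=
  ∃ U : Set X, IsOpen U ∧ x ∈ U ∧ Topology.IsEmbedding (U.restrict f)

/-- `g` sends the local arm at `x` represented by the global arm `C` to the local
arm at `g x` represented by `C'` (germ condition: some initial piece of `C` at `x`
is mapped into `C'`). -/
def MapsLocalArm {X : Type*} [TopologicalSpace X] (g : X → X) (x : X) (C C' : Set X) : Prop :=
  C ∈ arms x ∧ C' ∈ arms (g x) ∧ ∃ U ∈ nhds x, g '' (C ∩ U) ⊆ C'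

/-- `z` is periodic under `f` with exact period `n`. -/
def ExactPeriod {Y : Type*} (f : Y → Y) (z : Y) (n : ℕ) : Prop :=
  1 ≤ n ∧ f^[n] z = z ∧ ∀ k, 1 ≤ k → k < n → f^[k] z ≠ z

/-- The first return map `f^[n]` of the fixed point `z` of `f^[n]` permutes all the
local arms at `z` transitively in a single cycle. -/
def ArmsTransitive {X : Type*} [TopologicalSpace X] (f : X → X) (n : ℕ) (z : X) : Prop :=
  ∀ C ∈ arms z, ∀ C' ∈ arms z, ∃ j : ℕ, MapsLocalArm (f^[n * j]) z C C'

/-- An (abstract) Hubbard tree: a finite topological tree `X` together with a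
continuous surjection `f` and a critical point `c0`, subject to the axioms of
Bruin–Schleicher. -/
structure HubbardTree (X : Type*) [TopologicalSpace X] : Type _ where
  /-- the dynamics -/
  f : X → X
  /-- the critical point -/
  c0 : X
  compact : CompactSpace X
  t2 : T2Space X
  conn : ConnectedSpace X
  /-- the unique arc `[x,y]` joining two points -/
  arc : X → X → Set X
  arc_isArc : ∀ x y : X, IsArcBetween (arc x y) x y
  arc_unique : ∀ (x y : X) (A : Set X), IsArcBetween A x y → A = arc x y
  -- finiteness of the tree
  arms_finite : ∀ x : X, (arms x).Finite
  branch_finite : Set.Finite {x : X | IsBranchPt x}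
  endpoint_finite : Set.Finite {x : X | IsEndpoint x}
  cont : Continuous f
  surj : Function.Surjective f
  /-- every point has at most two inverse images -/
  two_preimages : ∀ y : X, ∃ a b : X, f ⁻¹' {y} ⊆ {a, b}
  /-- local homeomorphism onto its image away from the critical point -/
  local_homeo : ∀ x : X, x ≠ c0 → IsLocalHomeoAt f x
  /-- all endpoints lie on the critical orbit -/
  endpoints_on_orbit : ∀ x : X, IsEndpoint x → ∃ k : ℕ, f^[k] c0 = x
  /-- the critical point is periodic or preperiodic -/
  crit_preperiodic : ∃ k n : ℕ, 1 ≤ n ∧ f^[k + n] c0 = f^[k] c0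
  /-- the critical point is not fixed -/
  crit_not_fixed : f c0 ≠ c0
  /-- expansivity -/
  expansive : ∀ x y : X, x ≠ y →
    (IsBranchPt x ∨ ∃ k : ℕ, f^[k] c0 = x) →
    (IsBranchPt y ∨ ∃ k : ℕ, f^[k] c0 = y) →
    ∃ n : ℕ, c0 ∈ f^[n] '' (arc x y)

namespace HubbardTree

variable {X : Type*} [TopologicalSpace X] (H : HubbardTree X)

/-- The critical value `c₁ = f(c₀)`. -/
def c1 : X := H.f H.c0

/-- The component `T₁` of `T \ {c₀}` containing the critical value. -/
def T1 : Set X := connectedComponentIn {H.c0}ᶜ H.c1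

open Classical in
/-- The symbol (`0`, `1` or `*`) attached to a point of the tree. -/
noncomputable def symOf (x : X) : Sym :=
  if x = H.c0 then Sym.star else if x ∈ H.T1 then Sym.one else Sym.zero

/-- The itinerary of `x`: a sequence of symbols, 1-indexed (the value at index `0`
is irrelevant); entry `k ≥ 1` is the symbol of `f^[k-1] x`. -/
noncomputable def itin (x : X) : ℕ → Sym :=
  fun k => H.symOf (H.f^[k - 1] x)

/-- The kneading sequence: the itinerary of the critical value (1-indexed). -/
noncomputable def kneading : ℕ → Sym := H.itin H.c1

/-- `z` is the characteristic point of its periodic orbit: `c₁` lies in one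
component of `X \ {z}` while `c₀` and all other points of the orbit lie in a
different component. -/
def IsCharacteristic (z : X) : Prop :=
  ∃ Cv Cz : Set X, Cv ∈ arms z ∧ Cz ∈ arms z ∧ Cv ≠ Cz ∧
    H.c1 ∈ Cv ∧ H.c0 ∈ Cz ∧ ∀ k : ℕ, H.f^[k] z ≠ z → H.f^[k] z ∈ Cz

/-- The first return map fixes the local arm at `z` pointing to the critical point
and permutes all other local arms transitively in a single cycle. -/
def OtherArmsTransitive (n : ℕ) (z : X) : Prop :=
  ∀ C ∈ arms z, C ≠ armTo z H.c0 → ∀ C' ∈ arms z, C' ≠ armTo z H.c0 →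
    ∃ j : ℕ, MapsLocalArm (H.f^[n * j]) z C C'

/-- `z` is the characteristic point of an evil periodic orbit of branch points of
exact period `n`. -/
def IsEvilOrbit (z : X) (n : ℕ) : Prop :=
  ExactPeriod H.f z n ∧ (∀ k : ℕ, IsBranchPt (H.f^[k] z)) ∧
    H.IsCharacteristic z ∧ ¬ ArmsTransitive H.f n z

/-- `x` is precritical with `Step(x) = k`: `k ≥ 1` is minimal with `f^[k] x = c₁`. -/
def Step (x : X) (k : ℕ) : Prop :=
  1 ≤ k ∧ H.f^[k] x = H.c1 ∧ ∀ j, 1 ≤ j → j < k → H.f^[j] x ≠ H.c1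

/-- `x` is the closest precritical point `ζ_k`. -/
def IsClosestPrecritical (x : X) (k : ℕ) : Prop :=
  H.Step x k ∧ ∀ j, 1 ≤ j → j < k → H.c1 ∉ H.f^[j] '' (H.arc H.c1 x)

/-- `x` is the earliest precritical point on the set `A`, with `Step(x) = k`:
it is a precritical point on `A` of minimal Step. -/
def IsEarliestPrecriticalOn (A : Set X) (x : X) (k : ℕ) : Prop :=
  x ∈ A ∧ H.Step x k ∧ ∀ y ∈ A, ∀ j : ℕ, H.Step y j → k ≤ j

/-- Marked points: branch points and points of the critical orbit. -/
def MarkedPt (x : X) : Prop :=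
  IsBranchPt x ∨ ∃ k : ℕ, H.f^[k] H.c0 = x

/-- Two marked points are joined by an edge if the arc between them contains no
further marked point. -/
def IsEdge (x y : X) : Prop :=
  H.MarkedPt x ∧ H.MarkedPt y ∧ x ≠ y ∧
    ∀ w ∈ H.arc x y, H.MarkedPt w → w = x ∨ w = y

/-- Equivalence of Hubbard trees: a bijection between the marked points which
conjugates the dynamics and preserves edges. -/
def Equivalent {Y : Type*} [TopologicalSpace Y] (H' : HubbardTree Y) : Prop :=
  ∃ φ : X → Y,
    (∀ x : X, H.MarkedPt x → H'.MarkedPt (φ x)) ∧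
    (∀ x x' : X, H.MarkedPt x → H.MarkedPt x' → φ x = φ x' → x = x') ∧
    (∀ y : Y, H'.MarkedPt y → ∃ x : X, H.MarkedPt x ∧ φ x = y) ∧
    φ H.c0 = H'.c0 ∧
    (∀ x : X, H.MarkedPt x → φ (H.f x) = H'.f (φ x)) ∧
    (∀ x x' : X, H.MarkedPt x → H.MarkedPt x' →
      (H.IsEdge x x' ↔ H'.IsEdge (φ x) (φ x')))

end HubbardTree

/-! ### Combinatorics of kneading sequences -/

/-- The function `ρ_ν(n) = inf { k > n : ν_k ≠ ν_{k-n} } ∈ ℕ ∪ {∞}` (sequences are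
1-indexed). -/
noncomputable def rho (ν : ℕ → Sym) (n : ℕ) : ℕ∞ :=
  sInf {e : ℕ∞ | ∃ j : ℕ, e = (j : ℕ∞) ∧ n < j ∧ ν j ≠ ν (j - n)}

/-- `RhoOrbit ν k m` means that `m` belongs to the `ρ`-orbit
`k → ρ(k) → ρ(ρ(k)) → ⋯` of `k` (stopped before reaching `∞`). -/
inductive RhoOrbit (ν : ℕ → Sym) : ℕ → ℕ → Prop
  | refl (k : ℕ) : RhoOrbit ν k k
  | step {k m j : ℕ} : RhoOrbit ν k m → rho ν m = (j : ℕ∞) → RhoOrbit ν k j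

/-- `m` occurs in the internal address `1 → ρ(1) → ρ(ρ(1)) → ⋯` of `ν`. -/
def InternalAddress (ν : ℕ → Sym) (m : ℕ) : Prop := RhoOrbit ν 1 m

/-- `ν` is a `*`-periodic kneading sequence of (exact) period `n`:
`ν = overline(1 ν₂ … ν_{n-1} *)`. -/
def StarPeriodic (ν : ℕ → Sym) (n : ℕ) : Prop :=
  2 ≤ n ∧ ν 1 = Sym.one ∧ ν n = Sym.star ∧
    (∀ k, 1 ≤ k → ν (k + n) = ν k) ∧
    (∀ k, 1 ≤ k → k < n → ν k ≠ Sym.star)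

/-- `ν` fails the admissibility condition for period `m`. -/
def FailsAdmissibility (ν : ℕ → Sym) (m : ℕ) : Prop :=
  1 ≤ m ∧
  ¬ InternalAddress ν m ∧
  (∀ k : ℕ, k ∣ m → 1 ≤ k → k < m → rho ν k ≤ (m : ℕ∞)) ∧
  ∃ R r : ℕ, rho ν m = (R : ℕ∞) ∧ 1 ≤ r ∧ r ≤ m ∧ r ≡ R [MOD m] ∧ RhoOrbit ν r m

open Classical in
/-- The number `q(m)` of arms predicted by the kneading sequence, where
`ρ(m) = R < ∞` and `r ∈ {1,…,m}` is congruent to `R` modulo `m`. -/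
noncomputable def qArms (ν : ℕ → Sym) (m R r : ℕ) : ℕ :=
  if RhoOrbit ν r m then (R - r) / m + 1 else (R - r) / m + 2


/-! ### Embeddings into the plane and cyclic order of arms -/

/-- Three points in the plane are in (strictly) counterclockwise position. -/
def Ccw (p q r : ℝ × ℝ) : Prop :=
  0 < (q.1 - p.1) * (r.2 - p.2) - (q.2 - p.2) * (r.1 - p.1)

namespace HubbardTree

variable {X : Type*} [TopologicalSpace X] (H : HubbardTree X)

/-- Under an embedding `φ` of the tree into the plane, `p` is a first exit point of
the arm `C` at `x` through the circle of radius `ε` around `φ x`: `p = φ y` for a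
point `y ∈ C` at distance exactly `ε`, such that the arc from `x` to `y` stays
within distance `< ε` before reaching `y`. -/
def ExitPt (φ : X → ℝ × ℝ) (x : X) (C : Set X) (ε : ℝ) (p : ℝ × ℝ) : Prop :=
  ∃ y ∈ C, φ y = p ∧ dist (φ x) p = ε ∧
    ∀ z ∈ H.arc x y, z ≠ y → dist (φ x) (φ z) < ε

/-- The local arms at `x` represented by the arms `C, C', C''` are in
counterclockwise cyclic order under the embedding `φ`. -/
def ArmsCcw (φ : X → ℝ × ℝ) (x : X) (C C' C'' : Set X) : Prop :=
  ∃ ε₀ : ℝ, 0 < ε₀ ∧ ∀ ε : ℝ, 0 < ε → ε < ε₀ →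
    ∀ p p' p'' : ℝ × ℝ, H.ExitPt φ x C ε p → H.ExitPt φ x C' ε p' →
      H.ExitPt φ x C'' ε p'' → Ccw p p' p''

/-- `f` respects the cyclic order (induced by the embedding `φ`) of the local arms
at all branch points. -/
def RespectsCyclicOrder (φ : X → ℝ × ℝ) : Prop :=
  ∀ x : X, IsBranchPt x →
    ∀ C C' C'' : Set X, C ∈ arms x → C' ∈ arms x → C'' ∈ arms x →
      C ≠ C' → C' ≠ C'' → C ≠ C'' → H.ArmsCcw φ x C C' C'' →
      ∀ D D' D'' : Set X, MapsLocalArm H.f x C D → MapsLocalArm H.f x C' D' →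
        MapsLocalArm H.f x C'' D'' → H.ArmsCcw φ (H.f x) D D' D''

/-- The Hubbard tree can be topologically embedded into the plane `ℝ²` so that `f`
respects the cyclic order of the local arms at all branch points. -/
def PlanarEmbeddable : Prop :=
  ∃ φ : X → ℝ × ℝ, Topology.IsEmbedding φ ∧ H.RespectsCyclicOrder φ

end HubbardTree


namespace HubbardTree

section aux
variable {X : Type*} [TopologicalSpace X] (H : HubbardTree X)

lemma image_eq_arc {g : ℝ → X} (hg : Continuous g) {s t : ℝ} (hst : s ≤ t)
    (hi : Set.InjOn g (Set.Icc s t)) : g '' Set.Icc s t = H.arc (g s) (g t) := by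
  haveI := H.t2
  rcases hst.eq_or_lt with rfl | hlt
  · apply H.arc_unique
    left
    simp
  · apply H.arc_unique
    right
    refine ⟨fun h => hlt.ne (hi ⟨le_rfl, hst⟩ ⟨hst, le_rfl⟩ h), ?_⟩
    have hm : ∀ u : unitInterval, s + (t - s) * (u : ℝ) ∈ Set.Icc s t := by
      intro u
      have h0 := u.2.1
      have h1 := u.2.2
      constructor <;> nlinarith
    let γ : Path (g s) (g t) :=
      { toFun := fun u => g (s + (t - s) * (u : ℝ))
        continuous_toFun := by fun_prop
        source' := by simp
        target' := by simp }
    refine ⟨γ, ?_, ?_⟩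
    · apply Topology.IsClosedEmbedding.isEmbedding
      apply γ.continuous.isClosedEmbedding
      intro u v huv
      have h := hi (hm u) (hm v) huv
      have h2 : (t - s) * (u : ℝ) = (t - s) * (v : ℝ) := by linarith
      have h3 : (u : ℝ) = v := mul_left_cancel₀ (by linarith) h2
      exact Subtype.ext h3
    · ext z
      constructor
      · rintro ⟨u, rfl⟩
        exact ⟨_, hm u, rfl⟩
      · rintro ⟨r, hr, rfl⟩
        have hp : 0 < t - s := by linarith
        refine ⟨⟨(r - s) / (t - s), ?_, ?_⟩, ?_⟩
        · exact div_nonneg (by linarith [hr.1]) hp.le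
        · rw [div_le_one hp]; linarith [hr.2]
        · change g (s + (t - s) * ((r - s) / (t - s))) = g r
          congr 1
          field_simp
          ring

lemma exists_param (a b : X) (hab : a ≠ b) : ∃ g : ℝ → X, Continuous g ∧
    Set.InjOn g (Set.Icc 0 1) ∧ g 0 = a ∧ g 1 = b ∧ H.arc a b = g '' Set.Icc 0 1 := by
  rcases H.arc_isArc a b with ⟨h, _⟩ | ⟨_, γ, hγ, hr⟩
  · exact absurd h hab
  · refine ⟨γ.extend, γ.continuous_extend, ?_, by simp, by simp, ?_⟩
    · intro u hu v hv huv
      rw [γ.extend_apply hu, γ.extend_apply hv] at huv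
      exact congrArg Subtype.val (hγ.injective huv)
    · rw [← hr]
      ext z
      constructor
      · rintro ⟨u, rfl⟩
        exact ⟨u, u.2, by simp⟩
      · rintro ⟨u, hu, rfl⟩
        exact ⟨⟨u, hu⟩, by rw [γ.extend_apply hu]⟩

lemma arc_self (a : X) : H.arc a a = {a} :=
  (H.arc_unique a a {a} (Or.inl ⟨rfl, rfl⟩)).symm

lemma arc_symm (a b : X) : H.arc a b = H.arc b a := by
  by_cases hab : a = b
  · rw [hab]
  obtain ⟨g, hg, hi, h0, h1, hA⟩ := H.exists_param a b hab
  have hi' : Set.InjOn (fun t => g (1 - t)) (Set.Icc 0 1) := by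
    intro u hu v hv huv
    have := hi (x₁ := 1 - u) (x₂ := 1 - v) ⟨by linarith [hu.2], by linarith [hu.1]⟩
      ⟨by linarith [hv.2], by linarith [hv.1]⟩ huv
    linarith
  have := H.image_eq_arc (g := fun t => g (1 - t)) (by fun_prop) zero_le_one hi'
  simp only [sub_zero, sub_self, h0, h1] at this
  rw [← this, hA]
  ext z
  constructor
  · rintro ⟨u, hu, rfl⟩
    exact ⟨1 - u, ⟨by linarith [hu.2], by linarith [hu.1]⟩, by simp⟩
  · rintro ⟨u, hu, rfl⟩
    exact ⟨1 - u, ⟨by linarith [hu.2], by linarith [hu.1]⟩, by simp⟩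

lemma left_mem (a b : X) : a ∈ H.arc a b := by
  by_cases hab : a = b
  · rw [hab, arc_self]; rfl
  obtain ⟨g, hg, hi, h0, h1, hA⟩ := H.exists_param a b hab
  rw [hA]; exact ⟨0, by simp, h0⟩

lemma right_mem (a b : X) : b ∈ H.arc a b := by
  rw [arc_symm]; exact H.left_mem b a

lemma arc_compact (a b : X) : IsCompact (H.arc a b) := by
  by_cases hab : a = b
  · rw [hab, arc_self]; exact isCompact_singleton
  obtain ⟨g, hg, hi, h0, h1, hA⟩ := H.exists_param a b hab
  rw [hA]; exact isCompact_Icc.image hg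

lemma arc_closed (a b : X) : IsClosed (H.arc a b) := by
  haveI := H.t2
  exact (H.arc_compact a b).isClosed

lemma arc_preconn (a b : X) : IsPreconnected (H.arc a b) := by
  by_cases hab : a = b
  · rw [hab, arc_self]; exact isPreconnected_singleton
  obtain ⟨g, hg, hi, h0, h1, hA⟩ := H.exists_param a b hab
  rw [hA]; exact isPreconnected_Icc.image g hg.continuousOn

lemma arc_split {a b p : X} (hp : p ∈ H.arc a b) :
    H.arc a b = H.arc a p ∪ H.arc p b ∧ H.arc a p ∩ H.arc p b = {p} := by
  by_cases hab : a = b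
  · subst hab
    rw [arc_self] at hp
    have : p = a := hp
    subst this
    simp [arc_self]
  obtain ⟨g, hg, hi, h0, h1, hA⟩ := H.exists_param a b hab
  rw [hA] at hp
  obtain ⟨t, ht, rfl⟩ := hp
  have e1 := H.image_eq_arc hg ht.1 (hi.mono (Set.Icc_subset_Icc le_rfl ht.2))
  have e2 := H.image_eq_arc hg ht.2 (hi.mono (Set.Icc_subset_Icc ht.1 le_rfl))
  rw [h0] at e1
  rw [h1] at e2
  constructor
  · rw [hA, ← e1, ← e2, ← Set.image_union, Set.Icc_union_Icc_eq_Icc ht.1 ht.2]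
  · rw [← e1, ← e2]
    ext z
    constructor
    · rintro ⟨⟨u, hu, rfl⟩, v, hv, huv⟩
      have := hi ⟨ht.1.trans hv.1, hv.2⟩ ⟨hu.1, hu.2.trans ht.2⟩ huv
      have : u = t := by linarith [hu.2, hv.1]
      rw [this]; rfl
    · rintro rfl
      exact ⟨⟨t, ⟨ht.1, le_rfl⟩, rfl⟩, t, ⟨le_rfl, ht.2⟩, rfl⟩

lemma arc_sub_left {a b p : X} (hp : p ∈ H.arc a b) : H.arc a p ⊆ H.arc a b := by
  rw [(H.arc_split hp).1]; exact Set.subset_union_left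

lemma arc_sub_right {a b p : X} (hp : p ∈ H.arc a b) : H.arc p b ⊆ H.arc a b := by
  rw [(H.arc_split hp).1]; exact Set.subset_union_right

lemma arc_concat {a b p : X} (hp : H.arc a p ∩ H.arc p b ⊆ {p}) :
    H.arc a b = H.arc a p ∪ H.arc p b := by
  by_cases hap : a = p
  · subst hap
    rw [arc_self, Set.union_eq_right.2]
    simpa using H.left_mem a b
  by_cases hpb : p = b
  · subst hpb
    rw [H.arc_self p, Set.union_eq_left.2]
    simpa using H.right_mem a p
  obtain ⟨g, hg, hi, h0, h1, hA⟩ := H.exists_param a p hap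
  obtain ⟨k, hk, hj, k0, k1, hB⟩ := H.exists_param p b hpb
  let l : ℝ → X := fun t => if t ≤ 1 then g t else k (t - 1)
  have hl : Continuous l := by
    apply Continuous.if_le hg (by fun_prop) continuous_id continuous_const
    intro t ht
    simp only [id] at ht
    rw [ht, h1, sub_self, k0]
  have key : ∀ u v : ℝ, u ∈ Set.Icc (0 : ℝ) 1 → 1 < v → v ≤ 2 → g u ≠ k (v - 1) := by
    intro u v hu hv hv2 h
    have hm : g u ∈ H.arc a p ∩ H.arc p b := by
      rw [hA, hB]
      exact ⟨⟨u, hu, rfl⟩, v - 1, ⟨by linarith, by linarith⟩, h.symm⟩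
    have h3 : k (v - 1) = k 0 := by rw [← h, k0]; exact hp hm
    have := hj ⟨by linarith, by linarith⟩ ⟨le_rfl, zero_le_one⟩ h3
    linarith
  have hli : Set.InjOn l (Set.Icc 0 2) := by
    intro u hu v hv huv
    simp only [l] at huv
    split_ifs at huv with c1 c2 c2
    · exact hi ⟨hu.1, c1⟩ ⟨hv.1, c2⟩ huv
    · exact absurd huv (key u v ⟨hu.1, c1⟩ (not_le.1 c2) hv.2)
    · exact absurd huv.symm (key v u ⟨hv.1, c2⟩ (not_le.1 c1) hu.2)
    · have := hj ⟨by linarith, by linarith [hu.2]⟩ ⟨by linarith, by linarith [hv.2]⟩ huv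
      linarith
  have e := H.image_eq_arc hl (by norm_num : (0 : ℝ) ≤ 2) hli
  have l0 : l 0 = a := by simp [l, h0]
  have l2 : l 2 = b := by
    simp only [l]
    rw [if_neg (by norm_num)]
    norm_num [k1]
  rw [l0, l2] at e
  rw [← e, hA, hB]
  ext z
  constructor
  · rintro ⟨u, hu, rfl⟩
    by_cases c : u ≤ 1
    · left; exact ⟨u, ⟨hu.1, c⟩, by simp [l, c]⟩
    · right; exact ⟨u - 1, ⟨by linarith, by linarith [hu.2]⟩, by simp [l, c]⟩
  · rintro (⟨u, hu, rfl⟩ | ⟨u, hu, rfl⟩)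
    · exact ⟨u, ⟨hu.1, by linarith [hu.2]⟩, by simp [l, hu.2]⟩
    · rcases hu.1.eq_or_lt with h | h
      · refine ⟨1, by norm_num, ?_⟩
        simp [l, ← h, h1, k0]
      · refine ⟨u + 1, ⟨by linarith, by linarith [hu.2]⟩, ?_⟩
        simp [l, not_le.2 h]

lemma first_hit {a b : X} {K : Set X} (hK : IsClosed K) (hb : b ∈ K) :
    ∃ m ∈ H.arc a b, m ∈ K ∧ H.arc a m ∩ K ⊆ {m} := by
  by_cases hab : a = b
  · subst hab
    refine ⟨a, H.left_mem a a, hb, ?_⟩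
    rw [arc_self]; exact Set.inter_subset_left
  obtain ⟨g, hg, hi, h0, h1, hA⟩ := H.exists_param a b hab
  have hc : IsCompact (Set.Icc (0 : ℝ) 1 ∩ g ⁻¹' K) :=
    isCompact_Icc.inter_right (hK.preimage hg)
  obtain ⟨t, ⟨ht, htK⟩, hmin⟩ := hc.exists_isLeast ⟨1, by simp, by simpa [h1] using hb⟩
  refine ⟨g t, by rw [hA]; exact ⟨t, ht, rfl⟩, htK, ?_⟩
  have e1 := H.image_eq_arc hg ht.1 (hi.mono (Set.Icc_subset_Icc le_rfl ht.2))
  rw [h0] at e1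
  rw [← e1]
  rintro z ⟨⟨u, hu, rfl⟩, huK⟩
  have := hmin ⟨⟨hu.1, hu.2.trans ht.2⟩, huK⟩
  have : u = t := le_antisymm hu.2 this
  rw [this]; rfl

lemma arc_tri (a b p : X) : H.arc a b ⊆ H.arc a p ∪ H.arc p b := by
  obtain ⟨m, hm, hmK, hi⟩ := H.first_hit (a := a) (H.arc_closed p b) (H.left_mem p b)
  have hs := H.arc_sub_right hmK
  rw [H.arc_concat (p := m) (fun z hz => hi ⟨hz.1, hs hz.2⟩)]
  exact Set.union_subset_union (H.arc_sub_left hm) hs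

lemma not_sep_trans {q a b p : X} (h1 : q ∉ H.arc a p) (h2 : q ∉ H.arc p b) :
    q ∉ H.arc a b := fun h => (H.arc_tri a b p h).elim h1 h2

lemma no_loop (H : HubbardTree X) {g : ℝ → X} (hg : Continuous g) {s t : ℝ} (hst : s < t)
    (he : g s = g t) (hi : Set.InjOn g (Set.Ico s t)) : False := by
  have hi2 : Set.InjOn g (Set.Ioc s t) := by
    intro u hu v hv huv
    rcases hu.2.eq_or_lt with h | h <;> rcases hv.2.eq_or_lt with h' | h'
    · rw [h, h']
    · rw [h, ← he] at huv
      exact absurd (hi ⟨le_rfl, hst⟩ ⟨hv.1.le, h'⟩ huv) hv.1.ne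
    · rw [h', ← he] at huv
      exact absurd (hi ⟨hu.1.le, h⟩ ⟨le_rfl, hst⟩ huv) hu.1.ne'
    · exact hi ⟨hu.1.le, h⟩ ⟨hv.1.le, h'⟩ huv
  have e1 := H.image_eq_arc hg (s := s) (t := (s + t) / 2) (by linarith)
    (hi.mono (fun u (hu : u ∈ Set.Icc s ((s + t) / 2)) =>
      (⟨hu.1, by linarith [hu.2]⟩ : u ∈ Set.Ico s t)))
  have e2 := H.image_eq_arc hg (s := (s + t) / 2) (t := t) (by linarith)
    (hi2.mono (fun u (hu : u ∈ Set.Icc ((s + t) / 2) t) =>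
      (⟨by linarith [hu.1], hu.2⟩ : u ∈ Set.Ioc s t)))
  rw [he, arc_symm, ← e2] at e1
  have hm : g ((3 * s + t) / 4) ∈ g '' Set.Icc s ((s + t) / 2) :=
    ⟨_, ⟨by linarith, by linarith⟩, rfl⟩
  rw [e1] at hm
  obtain ⟨u, hu, huv⟩ := hm
  have := hi2 ⟨by linarith [hu.1], hu.2⟩ ⟨by linarith, by linarith⟩ huv
  linarith [hu.1]

lemma inj_of_loc_closed (H : HubbardTree X) {g : ℝ → X} (hg : Continuous g) {a b : ℝ}
    (hloc : ∀ r ∈ Set.Icc a b, ∃ V ∈ nhds r, Set.InjOn g (V ∩ Set.Icc a b)) :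
    Set.InjOn g (Set.Icc a b) := by
  haveI := H.t2
  by_contra hn
  let S : Set (ℝ × ℝ) := {p | p.1 ∈ Set.Icc a b ∧ p.2 ∈ Set.Icc a b ∧ p.1 < p.2 ∧ g p.1 = g p.2}
  have hne : S.Nonempty := by
    unfold Set.InjOn at hn
    push Not at hn
    obtain ⟨u, hu, v, hv, huv, hne⟩ := hn
    rcases lt_or_gt_of_ne hne with h | h
    · exact ⟨(u, v), hu, hv, h, huv⟩
    · exact ⟨(v, u), hv, hu, h, huv.symm⟩
  have hB : IsClosed {p : ℝ × ℝ | p.1 ∈ Set.Icc a b ∧ p.2 ∈ Set.Icc a b ∧ p.1 ≤ p.2 ∧ g p.1 = g p.2} := by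
    refine (isClosed_Icc.preimage continuous_fst).inter ((isClosed_Icc.preimage continuous_snd).inter
      ((isClosed_le continuous_fst continuous_snd).inter
        (isClosed_eq (hg.comp continuous_fst) (hg.comp continuous_snd))))
  have hcl : IsClosed S := by
    apply isClosed_of_closure_subset
    intro p hp
    have hp' := closure_minimal (fun q (hq : q ∈ S) =>
      (⟨hq.1, hq.2.1, hq.2.2.1.le, hq.2.2.2⟩ : q ∈ {p : ℝ × ℝ | p.1 ∈ Set.Icc a b ∧ p.2 ∈ Set.Icc a b ∧ p.1 ≤ p.2 ∧ g p.1 = g p.2})) hB hp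
    obtain ⟨h1, h2, h3, h4⟩ := hp'
    refine ⟨h1, h2, lt_of_le_of_ne h3 ?_, h4⟩
    intro heq
    obtain ⟨V, hV, hVi⟩ := hloc p.1 h1
    have hN : V ×ˢ V ∈ nhds p := by
      have : p = (p.1, p.1) := by ext <;> simp [heq]
      rw [this]
      exact prod_mem_nhds hV hV
    obtain ⟨q, ⟨hq1, hq2⟩, hqS⟩ := mem_closure_iff_nhds.1 hp _ hN
    exact hqS.2.2.1.ne (hVi ⟨hq1, hqS.1⟩ ⟨hq2, hqS.2.1⟩ hqS.2.2.2)
  have hc : IsCompact S := by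
    apply (isCompact_Icc.prod (isCompact_Icc (a := a) (b := b))).of_isClosed_subset hcl
    exact fun q hq => ⟨hq.1, hq.2.1⟩
  obtain ⟨p, hp, hmin⟩ := hc.exists_isMinOn hne
    (f := fun q : ℝ × ℝ => q.2 - q.1) (by fun_prop)
  have hmin' : ∀ u v, u ∈ Set.Icc a b → v ∈ Set.Icc a b → u < v → g u = g v →
      p.2 - p.1 ≤ v - u := fun u v h1 h2 h3 h4 => hmin (show (u, v) ∈ S from ⟨h1, h2, h3, h4⟩)
  apply H.no_loop hg hp.2.2.1 hp.2.2.2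
  intro u hu v hv huv
  have hu' : u ∈ Set.Icc a b := ⟨hp.1.1.trans hu.1, hu.2.le.trans hp.2.1.2⟩
  have hv' : v ∈ Set.Icc a b := ⟨hp.1.1.trans hv.1, hv.2.le.trans hp.2.1.2⟩
  by_contra hne
  rcases lt_or_gt_of_ne hne with h | h
  · have := hmin' u v hu' hv' h huv
    linarith [hu.1, hv.2]
  · have := hmin' v u hv' hu' h huv.symm
    linarith [hv.1, hu.2]

lemma inj_of_loc (H : HubbardTree X) {g : ℝ → X} (hg : Continuous g)
    (hloc : ∀ r ∈ Set.Ioo (0 : ℝ) 1, ∃ V ∈ nhds r, Set.InjOn g (V ∩ Set.Icc 0 1)) :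
    Set.InjOn g (Set.Icc 0 1) := by
  have h1 : Set.InjOn g (Set.Ioo 0 1) := by
    intro u hu v hv huv
    have hs : Set.Icc (min u v) (max u v) ⊆ Set.Ioo 0 1 := fun r hr =>
      ⟨(lt_min hu.1 hv.1).trans_le hr.1, hr.2.trans_lt (max_lt hu.2 hv.2)⟩
    refine H.inj_of_loc_closed hg (a := min u v) (b := max u v) ?_
      ⟨min_le_left _ _, le_max_left _ _⟩ ⟨min_le_right _ _, le_max_right _ _⟩ huv
    intro r hr
    obtain ⟨V, hV, hVi⟩ := hloc r (hs hr)
    exact ⟨V, hV, hVi.mono (Set.inter_subset_inter_right _ (hs.trans Set.Ioo_subset_Icc_self))⟩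
  have h2 : ∀ v ∈ Set.Ioo (0 : ℝ) 1, g 0 ≠ g v := by
    intro v hv h
    apply H.no_loop hg hv.1 h
    intro s hs t ht hst
    rcases hs.1.eq_or_lt with c | c <;> rcases ht.1.eq_or_lt with d | d
    · rw [← c, ← d]
    · rw [← c, h] at hst
      exact absurd (h1 hv ⟨d, ht.2.trans hv.2⟩ hst) ht.2.ne'
    · rw [← d, h] at hst
      exact absurd (h1 ⟨c, hs.2.trans hv.2⟩ hv hst) hs.2.ne
    · exact h1 ⟨c, hs.2.trans hv.2⟩ ⟨d, ht.2.trans hv.2⟩ hst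
  have h3 : Set.InjOn g (Set.Ico 0 1) := by
    intro s hs t ht hst
    rcases hs.1.eq_or_lt with c | c <;> rcases ht.1.eq_or_lt with d | d
    · rw [← c, ← d]
    · rw [← c] at hst
      exact absurd hst (h2 t ⟨d, ht.2⟩)
    · rw [← d] at hst
      exact absurd hst.symm (h2 s ⟨c, hs.2⟩)
    · exact h1 ⟨c, hs.2⟩ ⟨d, ht.2⟩ hst
  have h4 : ∀ v ∈ Set.Ico (0 : ℝ) 1, g v ≠ g 1 := by
    intro v hv h
    apply H.no_loop hg hv.2 h
    exact h3.mono (Set.Ico_subset_Ico_left hv.1)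
  intro s hs t ht hst
  rcases hs.2.eq_or_lt with c | c <;> rcases ht.2.eq_or_lt with d | d
  · rw [c, d]
  · rw [c] at hst
    exact absurd hst.symm (h4 t ⟨ht.1, d⟩)
  · rw [d] at hst
    exact absurd hst (h4 s ⟨hs.1, c⟩)
  · exact h3 ⟨hs.1, c⟩ ⟨ht.1, d⟩ hst

lemma f_arc {a b : X} (h : ∀ z ∈ H.arc a b, z = H.c0 → z = a ∨ z = b) :
    Set.InjOn H.f (H.arc a b) ∧ H.f '' H.arc a b = H.arc (H.f a) (H.f b) := by
  by_cases hab : a = b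
  · subst hab
    simp [arc_self]
  obtain ⟨g, hg, hi, h0, h1, hA⟩ := H.exists_param a b hab
  have hc : Continuous (H.f ∘ g) := H.cont.comp hg
  have hI : Set.InjOn (H.f ∘ g) (Set.Icc 0 1) := by
    apply H.inj_of_loc hc
    intro r hr
    have hr' := Set.Ioo_subset_Icc_self hr
    have hne : g r ≠ H.c0 := by
      intro e
      rcases h (g r) (by rw [hA]; exact ⟨r, hr', rfl⟩) e with e | e
      · rw [← h0] at e
        exact hr.1.ne' (hi hr' ⟨le_rfl, zero_le_one⟩ e)
      · rw [← h1] at e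
        exact hr.2.ne (hi hr' ⟨zero_le_one, le_rfl⟩ e)
    obtain ⟨U, hU, hrU, hE⟩ := H.local_homeo (g r) hne
    refine ⟨g ⁻¹' U, hg.continuousAt.preimage_mem_nhds (hU.mem_nhds hrU), ?_⟩
    intro u hu v hv huv
    apply hi hu.2 hv.2
    exact (Set.injOn_iff_injective.2 hE.injective) hu.1 hv.1 huv
  constructor
  · rw [hA]
    rintro _ ⟨u, hu, rfl⟩ _ ⟨v, hv, rfl⟩ huv
    rw [hI hu hv huv]
  · have := H.image_eq_arc hc zero_le_one hI
    rw [Set.image_comp] at this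
    simpa [h0, h1, hA] using this

/-! components -/

lemma comp_closure {p y : X} (hy : y ≠ p) :
    closure (connectedComponentIn {p}ᶜ y) ⊆ insert p (connectedComponentIn {p}ᶜ y) := by
  intro z hz
  by_cases hzp : z = p
  · left; exact hzp
  right
  have hpc : IsPreconnected (closure (connectedComponentIn {p}ᶜ y) ∩ {p}ᶜ) := by
    apply (isPreconnected_connectedComponentIn (x := y) (F := {p}ᶜ)).subset_closure
    · exact fun w hw => ⟨subset_closure hw, connectedComponentIn_subset _ _ hw⟩
    · exact Set.inter_subset_left
  exact hpc.subset_connectedComponentIn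
    ⟨subset_closure (mem_connectedComponentIn hy), hy⟩ Set.inter_subset_right ⟨hz, hzp⟩

lemma comp_open (H : HubbardTree X) {p y : X} (hy : y ≠ p) : IsOpen (connectedComponentIn {p}ᶜ y) := by
  haveI := H.t2
  have : (connectedComponentIn {p}ᶜ y)ᶜ =
      {p} ∪ ⋃ C ∈ {C ∈ arms p | C ≠ connectedComponentIn {p}ᶜ y}, insert p C := by
    ext z
    constructor
    · intro hz
      by_cases hzp : z = p
      · left; exact hzp
      right
      simp only [Set.mem_iUnion]
      refine ⟨connectedComponentIn {p}ᶜ z, ⟨⟨z, hzp, rfl⟩, ?_⟩, Or.inr (mem_connectedComponentIn hzp)⟩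
      intro e
      apply hz
      rw [← e]
      exact mem_connectedComponentIn hzp
    · have hp : p ∈ (connectedComponentIn {p}ᶜ y)ᶜ := fun h => connectedComponentIn_subset _ _ h rfl
      rintro (hz | hz)
      · rw [show z = p from hz]; exact hp
      · simp only [Set.mem_iUnion] at hz
        obtain ⟨C, ⟨⟨w, hw, rfl⟩, hne⟩, hz | hz⟩ := hz
        · rw [hz]; exact hp
        · intro hz2
          apply hne
          rw [connectedComponentIn_eq hz, connectedComponentIn_eq hz2]
  rw [← isClosed_compl_iff, this]
  refine isClosed_singleton.union (Set.Finite.isClosed_biUnion ((H.arms_finite p).subset (fun C hC => hC.1)) ?_)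
  rintro C ⟨⟨w, hw, rfl⟩, _⟩
  apply isClosed_of_closure_subset
  rw [Set.insert_eq, closure_union, closure_singleton, ← Set.insert_eq]
  exact Set.insert_subset (Set.mem_insert _ _) (comp_closure hw)

lemma comp_insert_preconn (H : HubbardTree X) {p y : X} (hy : y ≠ p) :
    IsPreconnected (insert p (connectedComponentIn {p}ᶜ y)) := by
  haveI := H.conn
  have hpc : p ∈ closure (connectedComponentIn {p}ᶜ y) := by
    by_contra hn
    have hcl : IsClosed (connectedComponentIn {p}ᶜ y) := by
      apply isClosed_of_closure_subset
      intro z hz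
      rcases comp_closure hy hz with h | h
      · rw [h] at hz; exact absurd hz hn
      · exact h
    have := IsClopen.eq_univ ⟨hcl, H.comp_open hy⟩ ⟨y, mem_connectedComponentIn hy⟩
    have hp : p ∈ connectedComponentIn {p}ᶜ y := by rw [this]; trivial
    exact connectedComponentIn_subset _ _ hp rfl
  exact isPreconnected_connectedComponentIn.subset_closure (Set.subset_insert _ _)
    (Set.insert_subset hpc subset_closure)

lemma cover (b z : X) : z = b ∨ ∃ e, IsEndpoint e ∧ z ∈ H.arc b e := by
  by_contra hz
  let K : Set X := {x | x = b ∨ ∃ e, IsEndpoint e ∧ x ∈ H.arc b e}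
  have hzK : z ∉ K := hz
  have hbK : b ∈ K := Or.inl rfl
  have hKc : IsPreconnected K := by
    apply isPreconnected_of_forall b
    rintro y (rfl | ⟨e, he, hy⟩)
    · exact ⟨{y}, by simpa using hbK, rfl, rfl, isPreconnected_singleton⟩
    · exact ⟨H.arc b e, fun w hw => Or.inr ⟨e, he, hw⟩, H.left_mem b e, hy, H.arc_preconn b e⟩
  let A : X → Set X := fun p => connectedComponentIn {p}ᶜ b
  have hne : ∀ p, p ∉ K → b ≠ p := fun p hp h => hp (h ▸ hbK)
  have hKA : ∀ p, p ∉ K → K ⊆ A p := fun p hp =>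
    hKc.subset_connectedComponentIn hbK (fun w hw h => hp (h ▸ hw))
  have hpA : ∀ p, p ∉ A p := fun p h => connectedComponentIn_subset _ _ h rfl
  have hstep : ∀ p, p ∉ K → ∀ y, y ≠ p → y ∉ A p → insert p (A p) ⊆ A y := by
    intro p hp y hy hyA
    apply (H.comp_insert_preconn (hne p hp)).subset_connectedComponentIn
    · exact Or.inr (mem_connectedComponentIn (hne p hp))
    · rintro w (h | h) h2
      · exact hy (by rw [← h]; exact h2.symm)
      · exact hyA ((show w = y from h2) ▸ h)
  have hex : ∀ p, p ∉ K → ∃ y, y ≠ p ∧ y ∉ A p := by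
    intro p hp
    by_contra hn
    push Not at hn
    apply hp
    right
    refine ⟨p, ?_, H.right_mem b p⟩
    have : arms p = {A p} := by
      ext C
      constructor
      · rintro ⟨y, hy, rfl⟩
        exact (connectedComponentIn_eq (hn y hy)).symm
      · intro h
        rw [show C = A p from h]
        exact ⟨b, hne p hp, rfl⟩
    unfold IsEndpoint
    rw [this, Set.ncard_singleton]
  obtain ⟨M, hM⟩ := zorn_subset (A '' Kᶜ) (by
    intro c hc hch
    rcases c.eq_empty_or_nonempty with rfl | hcne
    · exact ⟨A z, ⟨z, hzK, rfl⟩, by simp⟩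
    have : ∃ y, y ∉ ⋃₀ c := by
      by_contra hn
      push Not at hn
      haveI := H.compact
      haveI : Nonempty c := hcne.to_subtype
      obtain ⟨i, hi⟩ := isCompact_univ.elim_directed_cover (fun i : c => (i : Set X))
        (by
          rintro ⟨i, hi⟩
          obtain ⟨p, hp, rfl⟩ := hc hi
          exact H.comp_open (hne p hp))
        (by intro y _; obtain ⟨s, hs, hy⟩ := hn y; exact Set.mem_iUnion.2 ⟨⟨s, hs⟩, hy⟩)
        hch.directedOn.directed_val
      obtain ⟨p, hp, he⟩ := hc i.2
      exact hpA p (he ▸ hi (Set.mem_univ p))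
    obtain ⟨y, hy⟩ := this
    have hyK : y ∉ K := by
      obtain ⟨s, hs⟩ := hcne
      obtain ⟨p, hp, rfl⟩ := hc hs
      exact fun h => hy ⟨_, hs, hKA p hp h⟩
    refine ⟨A y, ⟨y, hyK, rfl⟩, ?_⟩
    intro s hs
    obtain ⟨p, hp, rfl⟩ := hc hs
    by_cases hyp : y = p
    · rw [hyp]
    · exact (Set.subset_insert _ _).trans (hstep p hp y hyp (fun h => hy ⟨_, hs, h⟩)))
  obtain ⟨p, hp, rfl⟩ := hM.prop
  obtain ⟨y, hyp, hyA⟩ := hex p hp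
  have h1 := hstep p hp y hyp hyA
  have hyK : y ∉ K := fun h => hyA (hKA p hp h)
  have h2 := hM.le_of_ge ⟨y, hyK, rfl⟩ ((Set.subset_insert _ _).trans h1)
  exact hpA p (h2 (h1 (Or.inl rfl)))

lemma comp_iff {q u v : X} (hu : u ≠ q) (hv : v ≠ q) :
    v ∈ connectedComponentIn {q}ᶜ u ↔ q ∉ H.arc u v := by
  haveI := H.t2
  constructor
  · intro hvC hq
    let W : Set X := {q} ∪ ⋃ e ∈ {e | IsEndpoint e ∧ e ≠ q ∧ q ∉ H.arc u e}, H.arc q e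
    let V : Set X := {q} ∪ ⋃ e ∈ {e | IsEndpoint e ∧ e ≠ q ∧ q ∈ H.arc u e}, H.arc q e
    have hW : IsClosed W := isClosed_singleton.union (Set.Finite.isClosed_biUnion
      (H.endpoint_finite.subset (fun e he => he.1)) (fun e _ => H.arc_closed q e))
    have hV : IsClosed V := isClosed_singleton.union (Set.Finite.isClosed_biUnion
      (H.endpoint_finite.subset (fun e he => he.1)) (fun e _ => H.arc_closed q e))
    have key : ∀ e w, w ≠ q → w ∈ H.arc q e → q ∉ H.arc w e := by
      intro e w hw hwe h
      have := (H.arc_split hwe).2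
      have h3 : q ∈ H.arc q w ∩ H.arc w e := ⟨H.left_mem q w, h⟩
      rw [this] at h3
      exact hw h3.symm
    have hWs : ∀ w, w ≠ q → (w ∈ W ↔ q ∉ H.arc u w) := by
      intro w hw
      constructor
      · rintro (h | h)
        · exact absurd h hw
        · simp only [Set.mem_iUnion] at h
          obtain ⟨e, ⟨_, _, he⟩, hwe⟩ := h
          apply H.not_sep_trans he
          rw [arc_symm]
          exact key e w hw hwe
      · intro h
        right
        simp only [Set.mem_iUnion]
        rcases H.cover q w with h' | ⟨e, he, hwe⟩
        · exact absurd h' hw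
        refine ⟨e, ⟨he, ?_, ?_⟩, hwe⟩
        · rintro rfl
          rw [arc_self] at hwe
          exact hw hwe
        · exact H.not_sep_trans h (key e w hw hwe)
    have hVs : ∀ w, w ≠ q → (w ∈ V ↔ q ∈ H.arc u w) := by
      intro w hw
      constructor
      · rintro (h | h)
        · exact absurd h hw
        · simp only [Set.mem_iUnion] at h
          obtain ⟨e, ⟨_, _, he⟩, hwe⟩ := h
          by_contra hn
          exact H.not_sep_trans hn (key e w hw hwe) he
      · intro h
        right
        simp only [Set.mem_iUnion]
        rcases H.cover q w with h' | ⟨e, he, hwe⟩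
        · exact absurd h' hw
        refine ⟨e, ⟨he, ?_, ?_⟩, hwe⟩
        · rintro rfl
          rw [arc_self] at hwe
          exact hw hwe
        · by_contra hn
          refine H.not_sep_trans hn ?_ h
          rw [arc_symm]
          exact key e w hw hwe
    have hC : IsPreconnected (connectedComponentIn {q}ᶜ u) := isPreconnected_connectedComponentIn
    have hCq : ∀ w ∈ connectedComponentIn {q}ᶜ u, w ≠ q := fun w hw =>
      connectedComponentIn_subset _ _ hw
    obtain ⟨w, hw, hw1, hw2⟩ := isPreconnected_closed_iff.1 hC W V hW hV
      (fun w hw => by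
        by_cases h : q ∈ H.arc u w
        · exact Or.inr ((hVs w (hCq w hw)).2 h)
        · exact Or.inl ((hWs w (hCq w hw)).2 h))
      ⟨u, mem_connectedComponentIn hu, (hWs u hu).2 (by rw [arc_self]; exact fun h => hu h.symm)⟩
      ⟨v, hvC, (hVs v hv).2 hq⟩
    exact (hWs w (hCq w hw)).1 hw1 ((hVs w (hCq w hw)).1 hw2)
  · intro h
    exact (H.arc_preconn u v).subset_connectedComponentIn (H.left_mem u v)
      (fun w hw e => h ((show w = q from e) ▸ hw)) (H.right_mem u v)

/-- interior point of an arc -/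
def IntPt (p : X) : Prop := ∃ a b, a ≠ p ∧ b ≠ p ∧ p ∈ H.arc a b

lemma not_endpoint {p : X} (h : H.IntPt p) : ¬ IsEndpoint p := by
  obtain ⟨a, b, ha, hb, hp⟩ := h
  intro he
  unfold IsEndpoint at he
  obtain ⟨C, hC⟩ := Set.ncard_eq_one.1 he
  have h1 : connectedComponentIn {p}ᶜ a ∈ arms p := ⟨a, ha, rfl⟩
  have h2 : connectedComponentIn {p}ᶜ b ∈ arms p := ⟨b, hb, rfl⟩
  rw [hC] at h1 h2
  have h3 : connectedComponentIn {p}ᶜ a = connectedComponentIn {p}ᶜ b :=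
    (show _ = C from h1).trans (show _ = C from h2).symm
  refine (H.comp_iff ha hb).1 ?_ hp
  rw [h3]
  exact mem_connectedComponentIn hb

lemma f_eq_c1 {p : X} (h : H.f p = H.c1) : p = H.c0 := by
  have hi := (H.f_arc (a := H.c0) (b := p) (fun z _ hz => Or.inl hz)).1
  exact hi (H.right_mem _ _) (H.left_mem _ _) h

lemma intPt_f_aux {p a b : X} (ha : a ≠ p) (hb : b ≠ p) (hp : p ∈ H.arc a b)
    (h : ∀ z ∈ H.arc a b, z = H.c0 → z = a ∨ z = b) : H.IntPt (H.f p) := by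
  obtain ⟨hi, he⟩ := H.f_arc h
  refine ⟨H.f a, H.f b, fun e => ha (hi (H.left_mem a b) hp e),
    fun e => hb (hi (H.right_mem a b) hp e), ?_⟩
  rw [← he]
  exact ⟨p, hp, rfl⟩

lemma intPt_f {p : X} (hp0 : p ≠ H.c0) (h : H.IntPt p) : H.IntPt (H.f p) := by
  obtain ⟨a, b, ha, hb, hp⟩ := h
  by_cases hc : H.c0 ∈ H.arc a b
  · have key : ∀ a b, b ≠ p → p ∈ H.arc a b → H.c0 ∈ H.arc a p → H.IntPt (H.f p) := by
      intro a b hb hp h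
      have h1 := H.arc_split hp
      have h2 := H.arc_sub_right h
      have hm : p ∈ H.arc H.c0 b := by
        rw [H.arc_concat (p := p) (fun z hz => by
          rw [← h1.2]; exact ⟨h2 hz.1, hz.2⟩)]
        exact Or.inl (H.right_mem _ _)
      exact H.intPt_f_aux hp0.symm hb hm (fun z _ hz => Or.inl hz)
    have h1 := (H.arc_split hp).1
    rw [h1] at hc
    rcases hc with hc | hc
    · exact key a b hb hp hc
    · exact key b a ha (by rwa [arc_symm]) (by rwa [arc_symm])
  · exact H.intPt_f_aux ha hb hp (fun z hz e => absurd (e ▸ hz) hc)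

lemma c1_not_int : ¬ H.IntPt H.c1 := by
  intro h
  have hall : ∀ n, H.IntPt (H.f^[n + 1] H.c0) := by
    intro n
    induction n with
    | zero => exact h
    | succ n ih =>
      rw [Function.iterate_succ_apply']
      by_cases hc : H.f^[n + 1] H.c0 = H.c0
      · rw [hc]; exact h
      · exact H.intPt_f hc ih
  rcases H.cover H.c0 H.c1 with h1 | ⟨e, he, hm⟩
  · exact H.crit_not_fixed h1
  · obtain ⟨k, hk⟩ := H.endpoints_on_orbit e he
    cases k with
    | zero =>
      have : H.c0 = e := hk
      rw [← this, arc_self] at hm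
      exact H.crit_not_fixed hm
    | succ n => exact H.not_endpoint (hk ▸ hall n) he

lemma common {c p q : X} (hc : c ∉ H.arc p q) :
    ∃ m, m ≠ c ∧ m ∈ H.arc c p ∧ m ∈ H.arc c q := by
  by_contra hn
  push Not at hn
  apply hc
  rw [H.arc_concat (p := c) (a := p) (b := q)]
  · exact Or.inl (H.right_mem _ _)
  · intro z hz
    by_contra hne
    exact hn z hne (by rw [arc_symm]; exact hz.1) hz.2

lemma not_three {u v w : X} (h1 : H.c0 ∈ H.arc u v) (h2 : H.c0 ∈ H.arc v w)
    (h3 : H.c0 ∈ H.arc u w) (hu : u ≠ H.c0) (hv : v ≠ H.c0) (hw : w ≠ H.c0) : False := by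
  have hf : ∀ u, H.f '' H.arc H.c0 u = H.arc H.c1 (H.f u) := fun u =>
    (H.f_arc (a := H.c0) (b := u) (fun z _ hz => Or.inl hz)).2
  have hne : ∀ u, u ≠ H.c0 → H.f u ≠ H.c1 := fun u hu h => hu (H.f_eq_c1 h)
  have hend : ∀ a b, a ≠ H.c1 → b ≠ H.c1 → H.c1 ∉ H.arc a b := fun a b ha hb h =>
    H.c1_not_int ⟨a, b, ha, hb, h⟩
  obtain ⟨m, hm, hmu, hmv⟩ := H.common (hend _ _ (hne u hu) (hne v hv))
  obtain ⟨n, hn, hnm, hnw⟩ := H.common (hend _ _ hm (hne w hw))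
  have hnu := H.arc_sub_left hmu hnm
  have hnv := H.arc_sub_left hmv hnm
  rw [← hf] at hnu hnv hnw
  obtain ⟨u', hu', eu⟩ := hnu
  obtain ⟨v', hv', ev⟩ := hnv
  obtain ⟨w', hw', ew⟩ := hnw
  have key : ∀ a b z, H.c0 ∈ H.arc a b → z ∈ H.arc H.c0 a → z ∈ H.arc H.c0 b → z = H.c0 := by
    intro a b z hab ha hb
    have := (H.arc_split hab).2
    have h3 : z ∈ H.arc a H.c0 ∩ H.arc H.c0 b := ⟨by rwa [arc_symm], hb⟩
    rw [this] at h3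
    exact h3
  have hz : ∀ z, H.f z = n → z ≠ H.c0 := by
    rintro z hz rfl
    exact hn hz.symm
  have d1 : u' ≠ v' := fun e => hz u' eu (key u v u' h1 hu' (e ▸ hv'))
  have d2 : v' ≠ w' := fun e => hz v' ev (key v w v' h2 hv' (e ▸ hw'))
  have d3 : u' ≠ w' := fun e => hz u' eu (key u w u' h3 hu' (e ▸ hw'))
  obtain ⟨a, b, hab⟩ := H.two_preimages n
  have q1 := hab (show u' ∈ H.f ⁻¹' {n} from eu)
  have q2 := hab (show v' ∈ H.f ⁻¹' {n} from ev)
  have q3 := hab (show w' ∈ H.f ⁻¹' {n} from ew)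
  simp only [Set.mem_insert_iff, Set.mem_singleton_iff] at q1 q2 q3
  grind

lemma mem_T1 {u : X} (hu : u ≠ H.c0) : u ∈ H.T1 ↔ H.c0 ∉ H.arc H.c1 u :=
  H.comp_iff H.crit_not_fixed hu

lemma sym_arc {u v : X} (hu : u ≠ H.c0) (hv : v ≠ H.c0) (h : H.symOf u = H.symOf v) :
    H.c0 ∉ H.arc u v := by
  unfold symOf at h
  rw [if_neg hu, if_neg hv] at h
  by_cases h1 : u ∈ H.T1
  · have h2 : v ∈ H.T1 := by
      by_contra h2
      simp [h1, h2] at h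
    rw [H.mem_T1 hu, arc_symm] at h1
    rw [H.mem_T1 hv] at h2
    exact H.not_sep_trans h1 h2
  · have h2 : v ∉ H.T1 := by
      intro h2
      simp [h1, h2] at h
    rw [H.mem_T1 hu, not_not] at h1
    rw [H.mem_T1 hv, not_not] at h2
    intro h3
    exact H.not_three h1 h3 h2 H.crit_not_fixed hu hv

lemma sym_eq_of_conn {S : Set X} (hS : IsPreconnected S) (h0 : H.c0 ∉ S) {u v : X}
    (hu : u ∈ S) (hv : v ∈ S) : H.symOf u = H.symOf v := by
  have key : ∀ u v, u ∈ S → v ∈ S → u ∈ H.T1 → v ∈ H.T1 := by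
    intro u v hu hv h
    have := hS.subset_connectedComponentIn (F := {H.c0}ᶜ) hu (fun w hw e => h0 ((show w = H.c0 from e) ▸ hw))
    unfold T1 at h ⊢
    rw [connectedComponentIn_eq h]
    exact this hv
  have hu0 : u ≠ H.c0 := fun e => h0 (e ▸ hu)
  have hv0 : v ≠ H.c0 := fun e => h0 (e ▸ hv)
  unfold symOf
  rw [if_neg hu0, if_neg hv0]
  by_cases h : u ∈ H.T1
  · rw [if_pos h, if_pos (key u v hu hv h)]
  · rw [if_neg h, if_neg (fun h' => h (key v u hv hu h'))]

lemma f_cont_iter (n : ℕ) : Continuous (H.f^[n]) := H.cont.iterate n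

end aux

end HubbardTree

lemma eq_of_lt_rho (ν : ℕ → Sym) {n j : ℕ} (h1 : n < j) (h2 : (j : ℕ∞) < rho ν n) :
    ν j = ν (j - n) := by
  by_contra hne
  refine absurd ?_ (not_le.2 h2)
  unfold rho
  exact sInf_le ⟨j, rfl, h1, hne⟩

/-- Lemma 5.10, "Images of Closest Precritical Points".
If `k < k' ≤ ρ(k)` and the closest precritical point `ζ_{k'}` exists in the tree,
then `f^[k] ζ_{k'}` is the closest precritical point `ζ_{k'-k}`. -/
theorem images_of_closest_precritical_points
    {X : Type*} [TopologicalSpace X] (H : HubbardTree X) (k k' : ℕ) (x : X)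
    (hlt : k < k') (hle : (k' : ℕ∞) ≤ rho H.kneading k)
    (hx : H.IsClosestPrecritical x k') :
    H.IsClosestPrecritical (H.f^[k] x) (k' - k) := by
  obtain ⟨⟨h1, hk', hmin⟩, hcl⟩ := hx
  refine ⟨⟨by omega, ?_, ?_⟩, ?_⟩
  · rw [← Function.iterate_add_apply, Nat.sub_add_cancel hlt.le]
    exact hk'
  · intro j hj1 hj2
    rw [← Function.iterate_add_apply]
    exact hmin _ (by omega) (by omega)
  have hA0 : ∀ j, j + 1 < k' → H.c0 ∉ H.f^[j] '' H.arc H.c1 x := by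
    rintro j hj ⟨z, hz, hz0⟩
    apply hcl (j + 1) (by omega) hj
    refine ⟨z, hz, ?_⟩
    rw [Function.iterate_succ_apply', hz0]
    rfl
  have hsx : ∀ j, j + 1 < k' → H.symOf (H.f^[j] x) = H.symOf (H.f^[j] H.c1) := by
    intro j hj
    exact H.sym_eq_of_conn ((H.arc_preconn H.c1 x).image _ (H.f_cont_iter j).continuousOn)
      (hA0 j hj) ⟨x, H.right_mem _ _, rfl⟩ ⟨H.c1, H.left_mem _ _, rfl⟩
  have hsy : ∀ j, j + k + 1 < k' → H.symOf (H.f^[j] H.c1) = H.symOf (H.f^[j] (H.f^[k] x)) := by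
    intro j hj
    rw [← Function.iterate_add_apply, hsx _ hj]
    have := eq_of_lt_rho H.kneading (n := k) (j := j + k + 1) (by omega)
      (lt_of_lt_of_le (by exact_mod_cast hj) hle)
    have e : j + k + 1 - k - 1 = j := by omega
    simp only [HubbardTree.kneading, HubbardTree.itin, e, Nat.add_sub_cancel] at this
    exact this.symm
  have hy0 : ∀ j, j + k + 1 < k' → H.f^[j] (H.f^[k] x) ≠ H.c0 := by
    intro j hj h
    rw [← Function.iterate_add_apply] at h
    exact hA0 _ hj ⟨x, H.right_mem _ _, h⟩
  have hc0 : ∀ j, j + k + 1 < k' → H.f^[j] H.c1 ≠ H.c0 := by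
    intro j hj h
    exact hA0 j (by omega) ⟨H.c1, H.left_mem _ _, h⟩
  have harc : ∀ j, j + k + 1 < k' →
      H.c0 ∉ H.arc (H.f^[j] H.c1) (H.f^[j] (H.f^[k] x)) := fun j hj =>
    H.sym_arc (hc0 j hj) (hy0 j hj) (hsy j hj)
  have him : ∀ j, j + k + 1 ≤ k' → H.f^[j] '' H.arc H.c1 (H.f^[k] x) =
      H.arc (H.f^[j] H.c1) (H.f^[j] (H.f^[k] x)) := by
    intro j
    induction j with
    | zero => intro _; simp
    | succ j ih =>
      intro hj
      rw [Function.iterate_succ', Set.image_comp, ih (by omega)]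
      exact (H.f_arc (fun z hz e => absurd (e ▸ hz) (harc j (by omega)))).2
  intro j hj1 hj2
  obtain ⟨i, rfl⟩ : ∃ i, j = i + 1 := ⟨j - 1, by omega⟩
  rintro ⟨z, hz, hzc⟩
  rw [Function.iterate_succ_apply'] at hzc
  have h0 := H.f_eq_c1 hzc
  apply harc i (by omega)
  rw [← him i (by omega), ← h0]
  exact ⟨z, hz, rfl⟩

end HubbardTrees
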